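/- Control of the relative stress by the relative total energy (Lemma on I, part (iii)): Assume (F̄, v̄, θ̄) ∈ Γ_{M,δ}, that ψ(F,θ) ∈ C³(ℝ^{d×d} × [0,∞)) and η(F,θ), Σ(F,θ) ∈ C²(ℝ^{d×d} × [0,∞)) satisfy the constitutive relations Σ = ∂ψ/∂F, η = −∂ψ/∂θ, e = ψ + θη, and the Gibbs conditions ψ_FF > 0 and η_θ > 0. Under the growth hypotheses (a1), (a2), (a3), there exists a constant C > 0 such that |Σ(F,θ|F̄,θ̄)| ≤ C · I(F,v,θ|F̄,v̄,θ̄) for all (F,v,θ) and for all (F̄, v̄, θ̄) ∈ Γ_{M,δ}, where Σ(F,θ|F̄,θ̄) = Σ(F,θ) − Σ(F̄,θ̄) − Σ_F(F̄,θ̄):(F − F̄) − Σ_θ(F̄,θ̄)(θ − θ̄) is the second-order Taylor remainder of the stress. -/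

import Mathlib

open scoped RealInnerProductSpace Topology
open MeasureTheory

noncomputable section

theorem aux_pos_min {X : Type*} [TopologicalSpace X] {K : Set X} (hK : IsCompact K) {f : X → ℝ}
    (hf : ContinuousOn f K) (hpos : ∀ x ∈ K, 0 < f x) : ∃ m > 0, ∀ x ∈ K, m ≤ f x := by
  rcases K.eq_empty_or_nonempty with rfl | hne
  · exact ⟨1, one_pos, by simp⟩
  · obtain ⟨x, hx, hmin⟩ := hK.exists_isMinOn hne hf
    exact ⟨f x, hpos x hx, fun y hy => hmin hy⟩

theorem aux_bound {X Y : Type*} [TopologicalSpace X] [NormedAddCommGroup Y] {K : Set X}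
    (hK : IsCompact K) {f : X → Y}
    (hf : ContinuousOn f K) : ∃ A > 0, ∀ x ∈ K, ‖f x‖ ≤ A := by
  obtain ⟨A, hA⟩ := hK.exists_bound_of_continuousOn hf
  exact ⟨max A 1, by positivity, fun x hx => (hA x hx).trans (le_max_left _ _)⟩

theorem aux_taylor {X Y : Type*} [NormedAddCommGroup X] [NormedSpace ℝ X]
    [NormedAddCommGroup Y] [NormedSpace ℝ Y] {S K : Set X} (hS : UniqueDiffOn ℝ S)
    (hK : IsCompact K) (hKc : Convex ℝ K) (hKS : K ⊆ S) {f : X → Y} (hf : ContDiffOn ℝ 2 f S) :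
    ∃ L > 0, ∀ x ∈ K, ∀ y ∈ K, ‖f y - f x - fderivWithin ℝ f S x (y - x)‖ ≤ L * ‖y - x‖ ^ 2 := by
  have h1 : ContDiffOn ℝ 1 (fderivWithin ℝ f S) S := hf.fderivWithin hS (by norm_num)
  have h2 : ContinuousOn (fderivWithin ℝ (fderivWithin ℝ f S) S) S :=
    h1.continuousOn_fderivWithin hS (by norm_num)
  obtain ⟨L, hL, hb⟩ := aux_bound (f := fderivWithin ℝ (fderivWithin ℝ f S) S) hK (h2.mono hKS)
  refine ⟨L, hL, fun x hx y hy => ?_⟩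
  have hseg : segment ℝ x y ⊆ K := hKc.segment_subset hx hy
  have key : ∀ z ∈ segment ℝ x y, ‖fderivWithin ℝ f S z - fderivWithin ℝ f S x‖ ≤ L * ‖y - x‖ := by
    intro z hz
    have := hKc.norm_image_sub_le_of_norm_hasFDerivWithin_le
      (f := fderivWithin ℝ f S) (f' := fderivWithin ℝ (fderivWithin ℝ f S) S) (C := L)
      (fun w hw => ((h1.differentiableOn (by norm_num) w (hKS hw)).hasFDerivWithinAt).mono hKS)
      hb hx (hseg hz)
    refine this.trans ?_
    gcongr
    exact norm_sub_le_of_mem_segment hz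
  have := (convex_segment x y).norm_image_sub_le_of_norm_hasFDerivWithin_le'
    (f := f) (f' := fderivWithin ℝ f S) (φ := fderivWithin ℝ f S x) (C := L * ‖y - x‖)
      (fun w hw => ((hf.differentiableOn (by norm_num) w (hKS (hseg hw))).hasFDerivWithinAt).mono
        (hseg.trans hKS))
      key (left_mem_segment ℝ x y) (right_mem_segment ℝ x y)
  calc _ ≤ _ := this
    _ = _ := by ring

/-- second order lower Taylor bound in one dimension -/
theorem aux_convex {h h' h'' : ℝ → ℝ} {a : ℝ}
    (h1 : ∀ t ∈ Set.Icc (0:ℝ) 1, HasDerivAt h (h' t) t)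
    (h2 : ∀ t ∈ Set.Icc (0:ℝ) 1, HasDerivAt h' (h'' t) t)
    (h3 : ∀ t ∈ Set.Icc (0:ℝ) 1, a ≤ h'' t) : a / 2 ≤ h 1 - h 0 - h' 0 := by
  have m1 : MonotoneOn (fun t => h' t - a * t) (Set.Icc (0:ℝ) 1) := by
    have hd : ∀ t ∈ Set.Icc (0:ℝ) 1, HasDerivAt (fun t => h' t - a * t) (h'' t - a * 1) t :=
      fun t ht => (h2 t ht).sub ((hasDerivAt_id t).const_mul a)
    apply monotoneOn_of_deriv_nonneg (convex_Icc 0 1)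
    · exact fun t ht => (hd t ht).continuousAt.continuousWithinAt
    · exact fun t ht => (hd t (interior_subset ht)).differentiableAt.differentiableWithinAt
    · intro t ht
      rw [(hd t (interior_subset ht)).deriv]
      linarith [h3 t (interior_subset ht)]
  have m2 : MonotoneOn (fun t => h t - h' 0 * t - a / 2 * t ^ 2) (Set.Icc (0:ℝ) 1) := by
    have hd : ∀ t ∈ Set.Icc (0:ℝ) 1, HasDerivAt (fun t => h t - h' 0 * t - a / 2 * t ^ 2)
        (h' t - h' 0 * 1 - a / 2 * (2 * t)) t := by
      intro t ht
      have := hasDerivAt_pow 2 t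
      simp only [Nat.cast_ofNat, Nat.add_one_sub_one, pow_one] at this
      exact ((h1 t ht).sub ((hasDerivAt_id t).const_mul _)).sub (this.const_mul _)
    apply monotoneOn_of_deriv_nonneg (convex_Icc 0 1)
    · exact fun t ht => (hd t ht).continuousAt.continuousWithinAt
    · exact fun t ht => (hd t (interior_subset ht)).differentiableAt.differentiableWithinAt
    · intro t ht
      have ht := interior_subset ht
      rw [(hd t ht).deriv]
      have := m1 (Set.left_mem_Icc.2 zero_le_one) ht ht.1
      simp only at this
      linarith
  have := m2 (Set.left_mem_Icc.2 zero_le_one) (Set.right_mem_Icc.2 zero_le_one) zero_le_one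
  simp only at this
  linarith

theorem aux_theta {h h' : ℝ → ℝ} {m a b : ℝ} (hc : ContinuousOn h (Set.Ici 0))
    (ha : 0 < a) (hb : 0 ≤ b)
    (h1 : ∀ s > 0, HasDerivAt h (h' s * (s - a)) s)
    (h2 : ∀ s ∈ Set.uIcc a b, m ≤ h' s) : m / 2 * (b - a) ^ 2 ≤ h b - h a := by
  have hd : ∀ s > 0, HasDerivAt (fun s => h s - m / 2 * (s - a) ^ 2)
      (h' s * (s - a) - m / 2 * (2 * (s - a))) s := by
    intro s hs
    have := ((hasDerivAt_id s).sub_const a).pow 2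
    simp only [id, Nat.cast_ofNat, Nat.add_one_sub_one, pow_one, mul_one] at this
    exact (h1 s hs).sub (this.const_mul _)
  have hcc : ContinuousOn (fun s => h s - m / 2 * (s - a) ^ 2) (Set.Ici 0) :=
    hc.sub (by fun_prop)
  rcases le_total a b with hab | hab
  · rw [Set.uIcc_of_le hab] at h2
    have : MonotoneOn (fun s => h s - m / 2 * (s - a) ^ 2) (Set.Icc a b) := by
      apply monotoneOn_of_deriv_nonneg (convex_Icc a b)
      · exact hcc.mono fun s hs => ha.le.trans hs.1
      · intro s hs
        rw [interior_Icc] at hs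
        exact (hd s (ha.trans hs.1)).differentiableAt.differentiableWithinAt
      · intro s hs
        rw [interior_Icc] at hs
        rw [(hd s (ha.trans hs.1)).deriv]
        have := h2 s ⟨hs.1.le, hs.2.le⟩
        nlinarith [hs.1]
    have := this (Set.left_mem_Icc.2 hab) (Set.right_mem_Icc.2 hab) hab
    simp only at this
    nlinarith
  · rw [Set.uIcc_of_ge hab] at h2
    have : AntitoneOn (fun s => h s - m / 2 * (s - a) ^ 2) (Set.Icc b a) := by
      apply antitoneOn_of_deriv_nonpos (convex_Icc b a)
      · exact hcc.mono fun s hs => hb.trans hs.1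
      · intro s hs
        rw [interior_Icc] at hs
        exact (hd s (hb.trans_lt hs.1)).differentiableAt.differentiableWithinAt
      · intro s hs
        rw [interior_Icc] at hs
        rw [(hd s (hb.trans_lt hs.1)).deriv]
        have := h2 s ⟨hs.1.le, hs.2.le⟩
        nlinarith [hs.2]
    have := this (Set.left_mem_Icc.2 hab) (Set.right_mem_Icc.2 hab) hab
    simp only at this
    nlinarith

theorem aux_pow {p : ℝ} (hp : 1 < p) {ε : ℝ} (hε : 0 < ε) :
    ∃ T > 0, ∀ x : ℝ, 0 ≤ x → x ≤ ε * x ^ p + T := by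
  refine ⟨(1 / ε) ^ (1 / (p - 1)), by positivity, fun x hx => ?_⟩
  rcases le_total x ((1 / ε) ^ (1 / (p - 1))) with h | h
  · have : 0 ≤ ε * x ^ p := by positivity
    linarith
  · have hT : 0 < (1 / ε) ^ (1 / (p - 1)) := by positivity
    have hx0 : 0 < x := hT.trans_le h
    have h2 : 1 / ε ≤ x ^ (p - 1) := by
      have := Real.rpow_le_rpow hT.le h (by linarith : 0 ≤ p - 1)
      rwa [← Real.rpow_mul (by positivity), one_div_mul_cancel (by linarith), Real.rpow_one] at this
    have h3 : x ^ p = x ^ (p - 1) * x := by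
      rw [← Real.rpow_add_one hx0.ne']; ring_nf
    have h4 : 1 ≤ ε * x ^ (p - 1) := by
      rw [div_le_iff₀ hε] at h2; linarith
    rw [h3]
    nlinarith

theorem aux_le_of_pow {p : ℝ} (hp : 1 < p) {x R : ℝ} (hR : 1 ≤ R) (h : x ^ p ≤ R) : x ≤ R := by
  by_contra! hx
  have h1 : 1 ≤ x := hR.trans hx.le
  have := Real.self_le_rpow_of_one_le h1 hp.le
  linarith

theorem aux_sliceF {E Y : Type*} [NormedAddCommGroup E] [NormedSpace ℝ E]
    [NormedAddCommGroup Y] [NormedSpace ℝ Y] {f : E × ℝ → Y}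
    (hf : DifferentiableOn ℝ f (Set.univ ×ˢ Set.Ici 0)) (F : E) {θ : ℝ} (hθ : 0 ≤ θ) :
    HasFDerivAt (fun F' => f (F', θ))
      ((fderivWithin ℝ f (Set.univ ×ˢ Set.Ici 0) (F, θ)).comp (ContinuousLinearMap.inl ℝ E ℝ)) F := by
  rw [← hasFDerivWithinAt_univ]
  have h1 : HasFDerivWithinAt (fun F' : E => (F', θ)) (ContinuousLinearMap.inl ℝ E ℝ) Set.univ F :=
    (hasFDerivAt_prodMk_left F θ).hasFDerivWithinAt
  have hm : Set.MapsTo (fun F' : E => (F', θ)) Set.univ (Set.univ ×ˢ Set.Ici 0) :=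
    fun x _ => ⟨trivial, hθ⟩
  exact (hf (F, θ) ⟨trivial, hθ⟩).hasFDerivWithinAt.comp F h1 hm

theorem aux_sliceT {E Y : Type*} [NormedAddCommGroup E] [NormedSpace ℝ E]
    [NormedAddCommGroup Y] [NormedSpace ℝ Y] {f : E × ℝ → Y}
    (hf : DifferentiableOn ℝ f (Set.univ ×ˢ Set.Ici 0)) (F : E) {θ : ℝ} (hθ : 0 ≤ θ) :
    HasDerivWithinAt (fun s => f (F, s))
      (fderivWithin ℝ f (Set.univ ×ˢ Set.Ici 0) (F, θ) (0, 1)) (Set.Ici 0) θ := by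
  have h1 : HasFDerivWithinAt (fun s : ℝ => (F, s)) (ContinuousLinearMap.inr ℝ E ℝ) (Set.Ici 0) θ :=
    (hasFDerivAt_prodMk_right F θ).hasFDerivWithinAt
  have := ((hf (F, θ) ⟨trivial, hθ⟩).hasFDerivWithinAt.comp θ h1
    (fun x hx => ⟨trivial, hx⟩)).hasDerivWithinAt
  simpa [Function.comp_def] using this

theorem aux_near {E : Type*} [NormedAddCommGroup E] [InnerProductSpace ℝ E] [FiniteDimensional ℝ E]
    (ψ : E → ℝ → ℝ) (Sig : E → ℝ → E) (η : E → ℝ → ℝ)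
    (hψreg : DifferentiableOn ℝ (fun z : E × ℝ => ψ z.1 z.2) (Set.univ ×ˢ Set.Ici 0))
    (hηreg : ContDiffOn ℝ 2 (fun z : E × ℝ => η z.1 z.2) (Set.univ ×ˢ Set.Ici 0))
    (hSigreg : ContDiffOn ℝ 2 (fun z : E × ℝ => Sig z.1 z.2) (Set.univ ×ˢ Set.Ici 0))
    (hconstSig : ∀ F θ, 0 ≤ θ → ∀ V, ⟪Sig F θ, V⟫ = fderiv ℝ (fun F' => ψ F' θ) F V)
    (hconstη : ∀ F θ, 0 ≤ θ → η F θ = - deriv (fun s => ψ F s) θ)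
    (hGibbsF : ∀ F θ, 0 ≤ θ → ∀ V : E, V ≠ 0 →
      0 < iteratedFDeriv ℝ 2 (fun F' => ψ F' θ) F ![V, V])
    (hGibbsθ : ∀ F θ, 0 ≤ θ → 0 < deriv (fun s => η F s) θ) (R : ℝ) :
    ∃ m > 0, ∀ Fb θb F θ, ‖Fb‖ ≤ R → 0 < θb → θb ≤ R → ‖F‖ ≤ R → 0 ≤ θ → θ ≤ R →
      m * (‖F - Fb‖ ^ 2 + (θ - θb) ^ 2) ≤
        (ψ F θ - ψ Fb θb - ⟪Sig Fb θb, F - Fb⟫ + η Fb θb * (θ - θb))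
                + (η F θ - η Fb θb) * (θ - θb) := by
  set S : Set (E × ℝ) := Set.univ ×ˢ Set.Ici 0 with hSdef
  have hS : UniqueDiffOn ℝ S := uniqueDiffOn_univ.prod (uniqueDiffOn_Ici 0)
  set K : Set (E × ℝ) := Metric.closedBall 0 R ×ˢ Set.Icc 0 R with hKdef
  have hK : IsCompact K := (isCompact_closedBall 0 R).prod isCompact_Icc
  have hKS : K ⊆ S := fun z hz => ⟨trivial, hz.2.1⟩
  have hSd := hSigreg.differentiableOn (by norm_num)
  have hηd := hηreg.differentiableOn (by norm_num)
  have hSF := fun F θ (h : 0 ≤ θ) => aux_sliceF hSd F h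
  have hηT := fun F θ (h : 0 ≤ θ) => aux_sliceT hηd F h
  have hψF := fun F θ (h : 0 ≤ θ) => aux_sliceF hψreg F h
  have hψT := fun F θ (h : 0 ≤ θ) => aux_sliceT hψreg F h
  have cS : ContinuousOn (fderivWithin ℝ (fun z : E × ℝ => Sig z.1 z.2) S) S :=
    hSigreg.continuousOn_fderivWithin hS (by norm_num)
  have cη : ContinuousOn (fderivWithin ℝ (fun z : E × ℝ => η z.1 z.2) S) S :=
    hηreg.continuousOn_fderivWithin hS (by norm_num)
  set DS := fderivWithin ℝ (fun z : E × ℝ => Sig z.1 z.2) S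
  set Dη := fderivWithin ℝ (fun z : E × ℝ => η z.1 z.2) S
  have posη : ∀ z ∈ K, 0 < Dη z (0, 1) := by
    rintro ⟨F, θ⟩ hz
    have h0 : 0 ≤ θ := hz.2.1
    have h1 := hGibbsθ F θ h0
    have h2 : HasDerivWithinAt (fun s => η F s) _ (Set.Ici 0) θ :=
      (differentiableAt_of_deriv_ne_zero h1.ne').hasDerivAt.hasDerivWithinAt
    rw [((uniqueDiffOn_Ici (0:ℝ)) θ h0).eq_deriv _ h2 (hηT F θ h0)] at h1
    exact h1
  have fdψ : ∀ F θ, 0 ≤ θ → fderiv ℝ (fun F' => ψ F' θ) F = innerSL ℝ (Sig F θ) := by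
    intro F θ h
    ext V
    rw [← hconstSig F θ h V]; rfl
  have posS : ∀ F θ, 0 ≤ θ → ∀ V : E, V ≠ 0 → 0 < ⟪DS (F, θ) (V, 0), V⟫ := by
    intro F θ h V hV
    have h1 := hGibbsF F θ h V hV
    rw [iteratedFDeriv_two_apply] at h1
    have h2 : fderiv ℝ (fun F' => ψ F' θ) = fun F' => innerSL ℝ (Sig F' θ) := by
      ext1 F'; exact fdψ F' θ h
    rw [h2] at h1
    have h3 := ((innerSL ℝ (E := E)).hasFDerivAt (x := Sig F θ)).comp F (hSF F θ h)
    have h4 := h3.fderiv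
    simp only [Function.comp_def] at h4
    rw [h4] at h1
    simp at h1
    exact h1
  obtain ⟨m1, hm1, hb1⟩ := aux_pos_min (f := fun z => Dη z (0, 1)) hK
    ((cη.mono hKS).clm_apply continuousOn_const) posη
  obtain ⟨m2, hm2, hb2⟩ := aux_pos_min
    (f := fun w : (E × ℝ) × E => ⟪DS w.1 (w.2, 0), w.2⟫)
    (hK.prod (isCompact_sphere (0:E) 1))
    (by
      refine ContinuousOn.inner (𝕜 := ℝ) (ContinuousOn.clm_apply ?_ ?_) continuousOn_snd
      · exact (cS.mono hKS).comp continuousOn_fst (fun w hw => hw.1)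
      · fun_prop)
    (by
      rintro ⟨⟨F, θ⟩, V⟩ hw
      refine posS F θ hw.1.2.1 V ?_
      rintro rfl
      simpa using hw.2)
  have hb2' : ∀ z ∈ K, ∀ V : E, m2 * ‖V‖ ^ 2 ≤ ⟪DS z (V, 0), V⟫ := by
    intro z hz V
    by_cases hV : V = 0
    · subst hV; simp
    · have hn : 0 < ‖V‖ := norm_pos_iff.2 hV
      have h1 := hb2 (z, ‖V‖⁻¹ • V) ⟨hz, by simp [norm_smul, hn.ne']⟩
      have h2 : ((‖V‖⁻¹ • V, 0) : E × ℝ) = ‖V‖⁻¹ • (V, 0) := by simp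
      simp only [h2, map_smul, real_inner_smul_left, real_inner_smul_right] at h1
      rw [← mul_assoc] at h1
      have h3 : m2 * ‖V‖ ^ 2 ≤ (‖V‖⁻¹ * ‖V‖⁻¹ * ⟪DS z (V, 0), V⟫) * ‖V‖ ^ 2 := by gcongr
      refine h3.trans (le_of_eq ?_)
      field_simp
  refine ⟨min (m1 / 2) (m2 / 2), by positivity, ?_⟩
  intro Fb θb F θ hFb hθb hθbR hF hθ hθR
  have A : m1 / 2 * (θ - θb) ^ 2 ≤ (ψ F θ + η F θ * (θ - θb)) - (ψ F θb + η F θb * (θb - θb)) := by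
    refine aux_theta (h := fun s => ψ F s + η F s * (s - θb)) (h' := fun s => Dη (F, s) (0, 1))
      ?_ hθb hθ ?_ ?_
    · intro s hs
      have h1 := (hψT F s hs).continuousWithinAt
      have h2 := (hηT F s hs).continuousWithinAt
      exact h1.add (h2.mul (by fun_prop))
    · intro s hs
      have h1 : HasDerivAt (fun s => ψ F s) _ s := (hψT F s hs.le).hasDerivAt (Ici_mem_nhds hs)
      have h2 : HasDerivAt (fun s => η F s) _ s := (hηT F s hs.le).hasDerivAt (Ici_mem_nhds hs)
      have h3 := h1.deriv
      have h4 := hconstη F s hs.le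
      rw [← h3] at h1
      refine (h1.add (h2.mul ((hasDerivAt_id s).sub_const θb))).congr_deriv ?_
      simp only [id]
      rw [show deriv (fun s => ψ F s) s = - η F s by linarith]
      ring
    · intro s hs
      have : s ∈ Set.Icc 0 R := (Set.uIcc_subset_Icc ⟨hθb.le, hθbR⟩ ⟨hθ, hθR⟩) hs
      exact hb1 (F, s) ⟨by simpa using hF, this⟩
  have B : m2 * ‖F - Fb‖ ^ 2 / 2 ≤ ψ F θb - ψ Fb θb - ⟪Sig Fb θb, F - Fb⟫ := by
    have hl : ∀ t : ℝ, HasDerivAt (fun t : ℝ => Fb + t • (F - Fb)) (F - Fb) t := by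
      intro t
      simpa using ((hasDerivAt_id t).smul_const (F - Fb)).const_add Fb
    have := aux_convex (h := fun t => ψ (Fb + t • (F - Fb)) θb)
      (h' := fun t => ⟪Sig (Fb + t • (F - Fb)) θb, F - Fb⟫)
      (h'' := fun t => ⟪DS (Fb + t • (F - Fb), θb) (F - Fb, 0), F - Fb⟫)
      (a := m2 * ‖F - Fb‖ ^ 2) ?_ ?_ ?_
    · simpa using this
    · intro t _
      have h1 := (hψF (Fb + t • (F - Fb)) θb hθb.le).differentiableAt.hasFDerivAt
      have h2 := h1.comp_hasDerivAt t (hl t)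
      rw [hconstSig _ _ hθb.le]
      exact h2
    · intro t _
      have h1 := (hSF (Fb + t • (F - Fb)) θb hθb.le).comp_hasDerivAt t (hl t)
      have h2 := h1.inner ℝ (hasDerivAt_const t (F - Fb))
      simpa using h2
    · intro t ht
      refine hb2' _ ⟨?_, hθb.le, hθbR⟩ _
      have hc := (convex_closedBall (0:E) R).add_smul_sub_mem (x := Fb) (y := F) (by simpa using hFb)
        (by simpa using hF) ht
      exact hc
  have C1 := mul_le_mul_of_nonneg_right (min_le_left (m1 / 2) (m2 / 2)) (sq_nonneg (θ - θb))
  have C2 := mul_le_mul_of_nonneg_right (min_le_right (m1 / 2) (m2 / 2)) (sq_nonneg ‖F - Fb‖)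
  nlinarith

set_option maxHeartbeats 800000

/-- **Lemma 5.2 (iii): control of the relative stress by the relative total energy.**
For `(F̄,v̄,θ̄) ∈ Γ_{M,δ}`, under the constitutive relations, the Gibbs conditions and
the growth hypotheses (a1)–(a3), there is `C > 0` with
`|Σ(F,θ|F̄,θ̄)| ≤ C · I(F,v,θ|F̄,v̄,θ̄)` for all `(F,v,θ)`, where
`Σ(F,θ|F̄,θ̄) = Σ(F,θ) − Σ(F̄,θ̄) − Σ_F(F̄,θ̄):(F−F̄) − Σ_θ(F̄,θ̄)(θ−θ̄)` is the
second-order Taylor remainder of the stress. -/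
theorem relative_stress_controlled_by_relative_total_energy
    (d : ℕ) (p q : ℝ) (hp : 1 < p) (hq : 1 < q)
    (ψ : EuclideanSpace ℝ (Fin d × Fin d) → ℝ → ℝ)
    (Sig : EuclideanSpace ℝ (Fin d × Fin d) → ℝ → EuclideanSpace ℝ (Fin d × Fin d))
    (η : EuclideanSpace ℝ (Fin d × Fin d) → ℝ → ℝ)
    -- regularity: ψ ∈ C³, η, Σ ∈ C² on ℝ^{d×d} × [0,∞)
    (hψreg : ContDiffOn ℝ 3 (fun z : EuclideanSpace ℝ (Fin d × Fin d) × ℝ => ψ z.1 z.2)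
      (Set.univ ×ˢ Set.Ici 0))
    (hηreg : ContDiffOn ℝ 2 (fun z : EuclideanSpace ℝ (Fin d × Fin d) × ℝ => η z.1 z.2)
      (Set.univ ×ˢ Set.Ici 0))
    (hSigreg : ContDiffOn ℝ 2 (fun z : EuclideanSpace ℝ (Fin d × Fin d) × ℝ => Sig z.1 z.2)
      (Set.univ ×ˢ Set.Ici 0))
    -- constitutive relations: Σ = ∂ψ/∂F, η = −∂ψ/∂θ (and e = ψ + θη)
    (hconstSig : ∀ F θ, 0 ≤ θ → ∀ V, ⟪Sig F θ, V⟫ = fderiv ℝ (fun F' => ψ F' θ) F V)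
    (hconstη : ∀ F θ, 0 ≤ θ → η F θ = - deriv (fun s => ψ F s) θ)
    -- Gibbs thermodynamic stability: ψ_FF > 0 and η_θ > 0
    (hGibbsF : ∀ F θ, 0 ≤ θ → ∀ V : EuclideanSpace ℝ (Fin d × Fin d), V ≠ 0 →
      0 < iteratedFDeriv ℝ 2 (fun F' => ψ F' θ) F ![V, V])
    (hGibbsθ : ∀ F θ, 0 ≤ θ → 0 < deriv (fun s => η F s) θ)
    -- (a1): growth of the internal energy e = ψ + θ η
    (c : ℝ) (hc : 0 < c)
    (ha1 : ∀ F θ, 0 ≤ θ →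
      c * (‖F‖ ^ p + θ ^ q) - c ≤ ψ F θ + θ * η F θ ∧
      ψ F θ + θ * η F θ ≤ c * (‖F‖ ^ p + θ ^ q) + c)
    -- (a2): |Σ(F,θ)|/(|F|^p + θ^q) → 0
    (ha2 : ∀ ε > (0:ℝ), ∃ R₀, ∀ F θ, 0 ≤ θ → R₀ ≤ ‖F‖ ^ p + θ ^ q →
      ‖Sig F θ‖ ≤ ε * (‖F‖ ^ p + θ ^ q))
    -- (a3): |η(F,θ)|/(|F|^p + θ^q) → 0
    (ha3 : ∀ ε > (0:ℝ), ∃ R₀, ∀ F θ, 0 ≤ θ → R₀ ≤ ‖F‖ ^ p + θ ^ q →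
      |η F θ| ≤ ε * (‖F‖ ^ p + θ ^ q))
    -- the compact set Γ_{M,δ}
    (M δ : ℝ) (hM : 0 < M) (hδ : 0 < δ) :
    ∃ C > (0:ℝ),
      ∀ (Fb : EuclideanSpace ℝ (Fin d × Fin d)) (vb : EuclideanSpace ℝ (Fin d)) (θb : ℝ),
        ‖Fb‖ ≤ M → ‖vb‖ ≤ M → δ ≤ θb → θb ≤ M →
        ∀ (F : EuclideanSpace ℝ (Fin d × Fin d)) (v : EuclideanSpace ℝ (Fin d)) (θ : ℝ),
          0 ≤ θ →
          ‖Sig F θ - Sig Fb θb - fderiv ℝ (fun F' => Sig F' θb) Fb (F - Fb)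
              - (θ - θb) • deriv (fun s => Sig Fb s) θb‖ ≤
            C * ((ψ F θ - ψ Fb θb - ⟪Sig Fb θb, F - Fb⟫ + η Fb θb * (θ - θb))
                + (η F θ - η Fb θb) * (θ - θb) + (1/2) * ‖v - vb‖ ^ 2) := by
  set S : Set (EuclideanSpace ℝ (Fin d × Fin d) × ℝ) := Set.univ ×ˢ Set.Ici 0 with hSdef
  have hS : UniqueDiffOn ℝ S := uniqueDiffOn_univ.prod (uniqueDiffOn_Ici 0)
  have hSd := hSigreg.differentiableOn (by norm_num)
  have hψd := hψreg.differentiableOn (by norm_num)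
  have cS : ContinuousOn (fderivWithin ℝ
      (fun z : EuclideanSpace ℝ (Fin d × Fin d) × ℝ => Sig z.1 z.2) S) S :=
    hSigreg.continuousOn_fderivWithin hS (by norm_num)
  -- the Taylor term is the full derivative
  have hlin : ∀ (Fb : EuclideanSpace ℝ (Fin d × Fin d)) (θb : ℝ), 0 < θb →
      ∀ (F : EuclideanSpace ℝ (Fin d × Fin d)) (θ : ℝ),
      Sig F θ - Sig Fb θb - fderiv ℝ (fun F' => Sig F' θb) Fb (F - Fb)
              - (θ - θb) • deriv (fun s => Sig Fb s) θb =
      Sig F θ - Sig Fb θb - fderivWithin ℝ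
        (fun z : EuclideanSpace ℝ (Fin d × Fin d) × ℝ => Sig z.1 z.2) S (Fb, θb)
          ((F, θ) - (Fb, θb)) := by
    intro Fb θb hθb F θ
    have h1 := (aux_sliceF hSd Fb hθb.le).fderiv
    have h2 := ((aux_sliceT hSd Fb hθb.le).hasDerivAt (Ici_mem_nhds hθb)).deriv
    simp only at h1 h2
    rw [h1, h2]
    have h3 : ((F, θ) - (Fb, θb) : EuclideanSpace ℝ (Fin d × Fin d) × ℝ)
        = (F - Fb, 0) + (θ - θb) • (0, 1) := by simp
    rw [h3, map_add, map_smul, sub_sub]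
    rfl
  set DS := fderivWithin ℝ
        (fun z : EuclideanSpace ℝ (Fin d × Fin d) × ℝ => Sig z.1 z.2) S
  -- bounds on the compact set
  have hΓ : IsCompact (Metric.closedBall (0 : EuclideanSpace ℝ (Fin d × Fin d)) M ×ˢ Set.Icc 0 M) :=
    (isCompact_closedBall _ _).prod isCompact_Icc
  have hΓS : Metric.closedBall (0 : EuclideanSpace ℝ (Fin d × Fin d)) M ×ˢ Set.Icc 0 M ⊆ S :=
    fun z hz => ⟨trivial, hz.2.1⟩
  obtain ⟨A, hA, hbA⟩ := aux_bound (f := DS) hΓ (cS.mono hΓS)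
  obtain ⟨B, hB, hbB⟩ := aux_bound
    (f := fun z : EuclideanSpace ℝ (Fin d × Fin d) × ℝ => Sig z.1 z.2) hΓ (hSd.continuousOn.mono hΓS)
  obtain ⟨P, hP, hbP⟩ := aux_bound
    (f := fun z : EuclideanSpace ℝ (Fin d × Fin d) × ℝ => ψ z.1 z.2) hΓ (hψd.continuousOn.mono hΓS)
  -- growth
  obtain ⟨R₂, hR₂⟩ := ha2 1 one_pos
  obtain ⟨R₃, hR₃⟩ := ha3 (c / (4 * M)) (by positivity)
  obtain ⟨T, hT, hbT⟩ := aux_pow hp (ε := c / (4 * B)) (by positivity)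
  obtain ⟨T1, hT1, hbT1⟩ := aux_pow hp (ε := 1) one_pos
  obtain ⟨T2, hT2, hbT2⟩ := aux_pow hq (ε := 1) one_pos
  set K2 : ℝ := c + P + B * (T + M) with hK2
  have hK2p : 0 < K2 := by positivity
  set K3 : ℝ := B + A * (T1 + T2 + 2 * M) with hK3
  have hK3p : 0 < K3 := by positivity
  obtain ⟨R, hRR2, hRR3, hR1, hRK, hRM⟩ :
      ∃ R : ℝ, R₂ ≤ R ∧ R₃ ≤ R ∧ 1 ≤ R ∧ 4 * K2 / c ≤ R ∧ M ≤ R :=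
    ⟨max R₂ (max R₃ (max 1 (max (4 * K2 / c) M))), by simp, by simp, by simp, by simp, by simp⟩
  obtain ⟨m, hm, hbm⟩ := aux_near ψ Sig η hψd hηreg hSigreg hconstSig hconstη hGibbsF hGibbsθ R
  obtain ⟨L, hL, hbL⟩ := aux_taylor (K := Metric.closedBall
      (0 : EuclideanSpace ℝ (Fin d × Fin d)) R ×ˢ Set.Icc 0 R) hS
    ((isCompact_closedBall _ _).prod isCompact_Icc)
    ((convex_closedBall _ _).prod (convex_Icc _ _)) (fun z hz => ⟨trivial, hz.2.1⟩) hSigreg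
  refine ⟨max (L / m) ((1 + 2 * A + K3) * (4 / c)), by positivity, ?_⟩
  intro Fb vb θb hFb _ hδθb hθbM F v θ hθ
  have hθb : 0 < θb := hδ.trans_le hδθb
  rw [hlin Fb θb hθb F θ]
  have hv : 0 ≤ (1/2 : ℝ) * ‖v - vb‖ ^ 2 := by positivity
  set J : ℝ := (ψ F θ - ψ Fb θb - ⟪Sig Fb θb, F - Fb⟫ + η Fb θb * (θ - θb))
                + (η F θ - η Fb θb) * (θ - θb) with hJ
  set Q : ℝ := ‖Sig F θ - Sig Fb θb - DS (Fb, θb) ((F, θ) - (Fb, θb))‖ with hQ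
  suffices h : 0 ≤ J ∧ (Q ≤ L / m * J ∨ Q ≤ (1 + 2 * A + K3) * (4 / c) * J) by
    obtain ⟨h0, h⟩ := h
    have h1 : J ≤ J + (1/2 : ℝ) * ‖v - vb‖ ^ 2 := by linarith
    have hpos : 0 ≤ max (L / m) ((1 + 2 * A + K3) * (4 / c)) := by positivity
    refine le_trans ?_ (mul_le_mul_of_nonneg_left h1 hpos)
    rcases h with h | h
    · exact h.trans (mul_le_mul_of_nonneg_right (le_max_left _ _) h0)
    · exact h.trans (mul_le_mul_of_nonneg_right (le_max_right _ _) h0)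
  have hx0 : 0 ≤ ‖F‖ ^ p := by positivity
  have hy0 : 0 ≤ θ ^ q := by positivity
  rcases le_total R (‖F‖ ^ p + θ ^ q) with hfar | hnear
  · -- far region
    have hzb : (Fb, θb) ∈ Metric.closedBall (0 : EuclideanSpace ℝ (Fin d × Fin d)) M
        ×ˢ Set.Icc 0 M := ⟨by simpa using hFb, hθb.le, hθbM⟩
    have hA' := hbA (Fb, θb) hzb
    have hB' : ‖Sig Fb θb‖ ≤ B := hbB (Fb, θb) hzb
    have hP' : |ψ Fb θb| ≤ P := hbP (Fb, θb) hzb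
    have g2 := hR₂ F θ hθ (hRR2.trans hfar)
    have g3 := hR₃ F θ hθ (hRR3.trans hfar)
    have g1 := (ha1 F θ hθ).1
    have t := hbT ‖F‖ (norm_nonneg F)
    have t1 := hbT1 ‖F‖ (norm_nonneg F)
    have t2 := hbT2 θ hθ
    set N : ℝ := ‖F‖ ^ p + θ ^ q with hN
    have hNp : 0 < N := by linarith
    have e1 : ⟪Sig Fb θb, F - Fb⟫ ≤ B * (‖F‖ + M) := by
      refine (real_inner_le_norm _ _).trans ?_
      have := norm_sub_le F Fb
      gcongr
      linarith
    have e2 : B * ‖F‖ ≤ c / 4 * N + B * T := by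
      calc B * ‖F‖ ≤ B * (c / (4 * B) * ‖F‖ ^ p + T) := by gcongr
        _ = c / 4 * ‖F‖ ^ p + B * T := by field_simp
        _ ≤ c / 4 * N + B * T := by gcongr; linarith
    have e3 : θb * η F θ ≤ c / 4 * N := by
      calc θb * η F θ ≤ θb * |η F θ| := by gcongr; exact le_abs_self _
        _ ≤ M * (c / (4 * M) * N) := by gcongr
        _ = c / 4 * N := by field_simp
    have e4 := (abs_le.1 hP').2
    have e5 : K2 ≤ c / 4 * N := by
      have := hRK.trans hfar
      rw [div_le_iff₀ hc] at this
      linarith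
    have eJ : c / 4 * N ≤ J := by
      have : J = (ψ F θ + θ * η F θ) - θb * η F θ - ψ Fb θb - ⟪Sig Fb θb, F - Fb⟫ := by
        rw [hJ]; ring
      rw [this]
      rw [hK2] at e5
      linarith
    refine ⟨le_trans (by positivity) eJ, Or.inr ?_⟩
    have q1 : ‖((F, θ) - (Fb, θb) : EuclideanSpace ℝ (Fin d × Fin d) × ℝ)‖
        ≤ ‖F‖ + θ + 2 * M := by
      rw [Prod.mk_sub_mk, Prod.norm_mk]
      apply max_le
      · have := norm_sub_le F Fb
        linarith
      · rw [Real.norm_eq_abs, abs_le]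
        constructor <;> linarith [norm_nonneg F]
    have q2 : ‖DS (Fb, θb) ((F, θ) - (Fb, θb))‖ ≤ A * (‖F‖ + θ + 2 * M) :=
      ((DS (Fb, θb)).le_opNorm _).trans (by gcongr)
    have q3 : Q ≤ ‖Sig F θ‖ + ‖Sig Fb θb‖ + ‖DS (Fb, θb) ((F, θ) - (Fb, θb))‖ :=
      (norm_sub_le _ _).trans (by gcongr; exact norm_sub_le _ _)
    have q4 : A * (‖F‖ + θ + 2 * M) ≤ A * (2 * N + (T1 + T2 + 2 * M)) := by
      apply mul_le_mul_of_nonneg_left _ hA.le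
      linarith
    have q5 : K3 ≤ K3 * N := le_mul_of_one_le_right hK3p.le (hR1.trans hfar)
    have q6 : Q ≤ (1 + 2 * A + K3) * N := by
      rw [hK3] at q5 ⊢
      linarith
    calc Q ≤ (1 + 2 * A + K3) * N := q6
      _ = (1 + 2 * A + K3) * (4 / c) * (c / 4 * N) := by field_simp
      _ ≤ _ := by gcongr
  · -- near region
    have hF : ‖F‖ ≤ R := aux_le_of_pow hp hR1 (by linarith)
    have hθR : θ ≤ R := aux_le_of_pow hq hR1 (by linarith)
    have j1 := hbm Fb θb F θ (hFb.trans hRM) hθb (hθbM.trans hRM) hF hθ hθR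
    have j2 := hbL (Fb, θb) ⟨by simpa using hFb.trans hRM, hθb.le, hθbM.trans hRM⟩
      (F, θ) ⟨by simpa using hF, hθ, hθR⟩
    refine ⟨le_trans (by positivity) j1, Or.inl ?_⟩
    have j3 : ‖((F, θ) - (Fb, θb) : EuclideanSpace ℝ (Fin d × Fin d) × ℝ)‖ ^ 2
        ≤ ‖F - Fb‖ ^ 2 + (θ - θb) ^ 2 := by
      rw [Prod.mk_sub_mk, Prod.norm_mk]
      rcases max_choice ‖F - Fb‖ ‖θ - θb‖ with h | h <;> rw [h]
      · nlinarith [sq_nonneg (θ - θb)]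
      · rw [Real.norm_eq_abs, sq_abs]
        nlinarith [sq_nonneg ‖F - Fb‖]
    calc Q ≤ L * ‖((F, θ) - (Fb, θb) : EuclideanSpace ℝ (Fin d × Fin d) × ℝ)‖ ^ 2 := j2
      _ ≤ L * (‖F - Fb‖ ^ 2 + (θ - θb) ^ 2) := by gcongr
      _ = L / m * (m * (‖F - Fb‖ ^ 2 + (θ - θb) ^ 2)) := by field_simp
      _ ≤ L / m * J := by gcongr
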